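/- Let S be a CFCST system over Σ. Every labelled sequent derivable in G3Km(S) is derivable in the refined labelled calculus Km(S)L. -/

import Mathlib

/-!
Labelled sequent calculi for context-free grammar logics with converse.
-/

namespace GrammarLogic

/-- Modal formulae in negation normal form over the alphabet `α`:
literals `p`, `p̄`, and the connectives `∨`, `∧`, `⟨x⟩`, `[x]` (`x ∈ α`). -/
inductive Fml (α : Type) : Type
  | pos : ℕ → Fml α
  | neg : ℕ → Fml α
  | or  : Fml α → Fml α → Fml α
  | and : Fml α → Fml α → Fml α
  | dia : α → Fml α → Fml α
  | box : α → Fml α → Fml α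

/-- Multisets of relational atoms `R_x w u` (labels are natural numbers). -/
abbrev RAtms (α : Type) : Type := Multiset (α × ℕ × ℕ)

/-- Multisets of labelled formulae `w : φ`. -/
abbrev LFmls (α : Type) : Type := Multiset (ℕ × Fml α)

/-- The converse `s̄` of a string: reverse and apply the converse characterwise. -/
def strConv {α : Type} (bar : α → α) (s : List α) : List α := s.reverse.map bar

/-- A context-free converse-closed string rewriting (CFCST) system over `α`
with converse operation `bar`: a finite set of production rules closed under
converses. -/
structure CFCST (α : Type) (bar : α → α) : Type where
  rules : Set (α × List α)
  finite : rules.Finite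
  closed : ∀ x s, (x, s) ∈ rules ↔ (bar x, strConv bar s) ∈ rules

/-- One-step rewriting: replace an occurrence of the head of a production rule
by its body. -/
def OneStep {α : Type} (P : Set (α × List α)) (s t : List α) : Prop :=
  ∃ u v x r, (x, r) ∈ P ∧ s = u ++ x :: v ∧ t = u ++ r ++ v

/-- `Lang P x s` iff `x →*_S s`, i.e. `s ∈ L_S(x)`. -/
def Lang {α : Type} (P : Set (α × List α)) (x : α) (s : List α) : Prop :=
  Relation.ReflTransGen (OneStep P) [x] s

/-- Edges of the propagation graph determined by the relational atoms `R`: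
each `R_x w u` in `R` gives an edge `(w,u)` labelled `x` and an edge `(u,w)`
labelled `x̄`. -/
def Edge {α : Type} (bar : α → α) (R : RAtms α) (w u : ℕ) (c : α) : Prop :=
  (c, w, u) ∈ R ∨ (bar c, u, w) ∈ R

/-- `PPath bar R w u s`: there is a (possibly empty) propagation path from `w`
to `u` in the propagation graph determined by `R` whose string is `s`. -/
inductive PPath {α : Type} (bar : α → α) (R : RAtms α) : ℕ → ℕ → List α → Prop
  | nil (w : ℕ) : PPath bar R w w []
  | cons {w u v : ℕ} {c : α} {s : List α} :
      Edge bar R w u c → PPath bar R u v s → PPath bar R w v (c :: s)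

/-- Side condition of the propagation rule `(Pr_⟨x⟩)`: there is a propagation
path from `w` to `u` whose string belongs to `L_S(x)`. -/
def PropCond {α : Type} (bar : α → α) (P : Set (α × List α)) (R : RAtms α)
    (x : α) (w u : ℕ) : Prop :=
  ∃ s, PPath bar R w u s ∧ Lang P x s

/-- The label `v` occurs in the labelled sequent `R ⊢ Γ`. -/
def occursIn {α : Type} (v : ℕ) (R : RAtms α) (Γ : LFmls α) : Prop :=
  (∃ x w u, (x, w, u) ∈ R ∧ (v = w ∨ v = u)) ∨ ∃ φ, (v, φ) ∈ Γ

/-- `ChainR s w u C`: the multiset `C` is a chain of relational atoms `R_s w u`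
(for `s = ε` it is empty and `u = w`). -/
inductive ChainR {α : Type} : List α → ℕ → ℕ → RAtms α → Prop
  | nil (w : ℕ) : ChainR [] w w 0
  | cons {y : α} {s : List α} {w v u : ℕ} {C : RAtms α} :
      ChainR s v u C → ChainR (y :: s) w u ((y, w, v) ::ₘ C)

/-- Gated labelled sequent calculi for grammar logics.  The rules `(id)`, `(∨r)`,
`(∧r)` and `([x])` are always present; the rules `(⟨x⟩)`, the propagation rules
`(Pr_⟨x⟩)`, the structural rules `(p^x_s)` (for `x → s ∈ P`) and the converse
rules `(C1^x)` are present exactly when the respective gates `gDia`, `gPr`,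
`gProd`, `gCnv` hold.  In particular, `Der bar P True False True True` is the
labelled calculus `G3Km(S)` and `Der bar P False True False False` is the
refined labelled calculus `Km(S)L`. -/
inductive Der {α : Type} (bar : α → α) (P : Set (α × List α))
    (gDia gPr gProd gCnv : Prop) : RAtms α → LFmls α → Prop
  | id (R : RAtms α) (Γ : LFmls α) (w p : ℕ) :
      Der bar P gDia gPr gProd gCnv R ((w, Fml.pos p) ::ₘ (w, Fml.neg p) ::ₘ Γ)
  | orr {R : RAtms α} {Γ : LFmls α} {w : ℕ} {φ ψ : Fml α} :
      Der bar P gDia gPr gProd gCnv R ((w, φ) ::ₘ (w, ψ) ::ₘ Γ) →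
      Der bar P gDia gPr gProd gCnv R ((w, Fml.or φ ψ) ::ₘ Γ)
  | andr {R : RAtms α} {Γ : LFmls α} {w : ℕ} {φ ψ : Fml α} :
      Der bar P gDia gPr gProd gCnv R ((w, φ) ::ₘ Γ) →
      Der bar P gDia gPr gProd gCnv R ((w, ψ) ::ₘ Γ) →
      Der bar P gDia gPr gProd gCnv R ((w, Fml.and φ ψ) ::ₘ Γ)
  | boxr {R : RAtms α} {Γ : LFmls α} {w u : ℕ} {x : α} {φ : Fml α} :
      ¬ occursIn u R ((w, Fml.box x φ) ::ₘ Γ) →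
      Der bar P gDia gPr gProd gCnv ((x, w, u) ::ₘ R) ((u, φ) ::ₘ Γ) →
      Der bar P gDia gPr gProd gCnv R ((w, Fml.box x φ) ::ₘ Γ)
  | diar {R : RAtms α} {Γ : LFmls α} {w u : ℕ} {x : α} {φ : Fml α} :
      gDia →
      Der bar P gDia gPr gProd gCnv ((x, w, u) ::ₘ R)
        ((w, Fml.dia x φ) ::ₘ (u, φ) ::ₘ Γ) →
      Der bar P gDia gPr gProd gCnv ((x, w, u) ::ₘ R) ((w, Fml.dia x φ) ::ₘ Γ)
  | pr {R : RAtms α} {Γ : LFmls α} {w u : ℕ} {x : α} {φ : Fml α} :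
      gPr → PropCond bar P R x w u →
      Der bar P gDia gPr gProd gCnv R ((w, Fml.dia x φ) ::ₘ (u, φ) ::ₘ Γ) →
      Der bar P gDia gPr gProd gCnv R ((w, Fml.dia x φ) ::ₘ Γ)
  | prodr {R C : RAtms α} {Γ : LFmls α} {x : α} {s : List α} {w u : ℕ} :
      gProd → (x, s) ∈ P → ChainR s w u C →
      Der bar P gDia gPr gProd gCnv (C + ((x, w, u) ::ₘ R)) Γ →
      Der bar P gDia gPr gProd gCnv (C + R) Γ
  | cnvr {R : RAtms α} {Γ : LFmls α} {x : α} {w u : ℕ} :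
      gCnv →
      Der bar P gDia gPr gProd gCnv ((x, w, u) ::ₘ (bar x, u, w) ::ₘ R) Γ →
      Der bar P gDia gPr gProd gCnv ((x, w, u) ::ₘ R) Γ

/-- The labelled calculus `G3Km(S)`. -/
abbrev G3Km {α : Type} (bar : α → α) (S : CFCST α bar) : RAtms α → LFmls α → Prop :=
  Der bar S.rules True False True True

/-- The refined labelled calculus `Km(S)L`. -/
abbrev KmL {α : Type} (bar : α → α) (S : CFCST α bar) : RAtms α → LFmls α → Prop :=
  Der bar S.rules False True False False

/-!
Both structural rules read upwards add a relational atom `R_x wu` that is already witnessed by a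
propagation path from `w` to `u` with string in `L_S(x)`: the chain `R_s wu` for `(p^x_s)`, the
reversed edge for `(C1^x)`. Replacing each traversal of such an atom by its witnessing path (or the
converse path, as `L_S(x̄)` consists of the converses of `L_S(x)`) turns a propagation path with
string `s` into one with string `t` such that `s →* t`. Hence propagation never needs the extra
atoms, and they can be deleted from any derivation in `Km(S)L`. The rule `(⟨x⟩)` is propagation
along a single edge.
-/

section

variable {α : Type} {bar : α → α} {P : Set (α × List α)}

/-- The rewriting relation `→*_S` on strings. -/
abbrev Rewrites (P : Set (α × List α)) : List α → List α → Prop :=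
  Relation.ReflTransGen (OneStep P)

/-- Closure of a set of production rules under converse. For involutive `bar` this one implication
already gives the equivalence of `CFCST.closed`. -/
def ConverseClosed (bar : α → α) (P : Set (α × List α)) : Prop :=
  ∀ x s, (x, s) ∈ P → (bar x, strConv bar s) ∈ P

theorem OneStep.of_mem {x : α} {s : List α} (h : (x, s) ∈ P) : OneStep P [x] s :=
  ⟨[], [], x, s, h, rfl, by simp⟩

theorem OneStep.append_left (a : List α) {s t : List α} (h : OneStep P s t) :
    OneStep P (a ++ s) (a ++ t) := by
  obtain ⟨u, v, x, r, hr, rfl, rfl⟩ := h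
  exact ⟨a ++ u, v, x, r, hr, by simp, by simp⟩

theorem OneStep.append_right (b : List α) {s t : List α} (h : OneStep P s t) :
    OneStep P (s ++ b) (t ++ b) := by
  obtain ⟨u, v, x, r, hr, rfl, rfl⟩ := h
  exact ⟨u, v ++ b, x, r, hr, by simp, by simp⟩

theorem OneStep.converse (hP : ConverseClosed bar P) {s t : List α} (h : OneStep P s t) :
    OneStep P (strConv bar s) (strConv bar t) := by
  obtain ⟨u, v, x, r, hr, rfl, rfl⟩ := h
  exact ⟨strConv bar v, strConv bar u, bar x, strConv bar r, hP x r hr,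
    by simp [strConv], by simp [strConv]⟩

theorem Rewrites.append {s s' t t' : List α} (hs : Rewrites P s s') (ht : Rewrites P t t') :
    Rewrites P (s ++ t) (s' ++ t') :=
  (hs.lift (· ++ t) fun _ _ => OneStep.append_right t).trans
    (ht.lift (s' ++ ·) fun _ _ => OneStep.append_left s')

theorem Lang.converse (hP : ConverseClosed bar P) {x : α} {s : List α} (h : Lang P x s) :
    Lang P (bar x) (strConv bar s) :=
  Relation.ReflTransGen.lift (strConv bar) (fun _ _ => OneStep.converse hP) _ _ h

theorem Edge.mono {R R' : RAtms α} {w u : ℕ} {c : α} (hR : R ⊆ R') (h : Edge bar R w u c) :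
    Edge bar R' w u c :=
  h.imp (@hR _) (@hR _)

theorem Edge.symm (hbar : Function.Involutive bar) {R : RAtms α} {w u : ℕ} {c : α}
    (h : Edge bar R w u c) : Edge bar R u w (bar c) := by
  rcases h with h | h
  · exact Or.inr ((hbar c).symm ▸ h)
  · exact Or.inl h

theorem PPath.single {R : RAtms α} {w u : ℕ} {c : α} (h : Edge bar R w u c) :
    PPath bar R w u [c] :=
  .cons h (.nil u)

theorem PPath.append {R : RAtms α} {w u v : ℕ} {s t : List α}
    (h : PPath bar R w u s) (h' : PPath bar R u v t) : PPath bar R w v (s ++ t) := by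
  induction h with
  | nil => exact h'
  | cons e _ ih => exact .cons e (ih h')

theorem PPath.mono {R R' : RAtms α} {w u : ℕ} {s : List α} (hR : R ⊆ R')
    (h : PPath bar R w u s) : PPath bar R' w u s := by
  induction h with
  | nil w => exact .nil w
  | cons e _ ih => exact .cons (e.mono hR) ih

theorem PPath.reverse (hbar : Function.Involutive bar) {R : RAtms α} {w u : ℕ} {s : List α}
    (h : PPath bar R w u s) : PPath bar R u w (strConv bar s) := by
  induction h with
  | nil w => exact .nil w
  | cons e _ ih => simpa [strConv] using ih.append (.single (e.symm hbar))

theorem ChainR.ppath {s : List α} {w u : ℕ} {C : RAtms α} (h : ChainR s w u C) :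
    PPath bar C w u s := by
  induction h with
  | nil w => exact .nil w
  | cons _ ih =>
    exact .cons (Or.inl (Multiset.mem_cons_self _ _)) (ih.mono (Multiset.subset_cons _ _))

theorem PropCond.mono {R R' : RAtms α} {x : α} {w u : ℕ} (hR : R ⊆ R')
    (h : PropCond bar P R x w u) : PropCond bar P R' x w u := by
  obtain ⟨s, hpath, hlang⟩ := h
  exact ⟨s, hpath.mono hR, hlang⟩

theorem PropCond.of_mem {R : RAtms α} {x : α} {w u : ℕ} (h : (x, w, u) ∈ R) :
    PropCond bar P R x w u :=
  ⟨[x], .single (Or.inl h), .refl⟩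

theorem PropCond.of_rule {R : RAtms α} {x : α} {s : List α} {w u : ℕ} (hs : (x, s) ∈ P)
    (h : PPath bar R w u s) : PropCond bar P R x w u :=
  ⟨s, h, .single (OneStep.of_mem hs)⟩

theorem PropCond.symm (hbar : Function.Involutive bar) (hP : ConverseClosed bar P)
    {R : RAtms α} {x : α} {w u : ℕ} (h : PropCond bar P R x w u) :
    PropCond bar P R (bar x) u w := by
  obtain ⟨s, hpath, hlang⟩ := h
  exact ⟨strConv bar s, hpath.reverse hbar, hlang.converse hP⟩

/-- `R` simulates `R'` if every atom `R_x wu` of `R'` is witnessed by a propagation path of `R` from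
`w` to `u` with string in `L_S(x)`. The atoms of `R'` are then redundant in the presence of `R`. -/
def Simulates (bar : α → α) (P : Set (α × List α)) (R R' : RAtms α) : Prop :=
  ∀ ⦃x w u⦄, (x, w, u) ∈ R' → PropCond bar P R x w u

namespace Simulates

variable {R R' : RAtms α} {x : α} {w u : ℕ}

theorem refl (R : RAtms α) : Simulates bar P R R := fun _ _ _ => .of_mem

theorem mono {R₀ : RAtms α} (hR : R₀ ⊆ R) (h : Simulates bar P R₀ R') : Simulates bar P R R' :=
  fun _ _ _ hmem => (h hmem).mono hR

theorem cons (hx : PropCond bar P R x w u) (h : Simulates bar P R R') :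
    Simulates bar P R ((x, w, u) ::ₘ R') := by
  intro y v v' hmem
  rcases Multiset.mem_cons.1 hmem with heq | hmem
  · cases heq
    exact hx
  · exact h hmem

theorem propCond_of_edge (hbar : Function.Involutive bar) (hP : ConverseClosed bar P)
    (h : Simulates bar P R R') (e : Edge bar R' w u x) : PropCond bar P R x w u := by
  rcases e with hmem | hmem
  · exact h hmem
  · exact hbar x ▸ (h hmem).symm hbar hP

theorem exists_ppath (hbar : Function.Involutive bar) (hP : ConverseClosed bar P)
    (h : Simulates bar P R R') {s : List α} (hpath : PPath bar R' w u s) :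
    ∃ t, PPath bar R w u t ∧ Rewrites P s t := by
  induction hpath with
  | nil w => exact ⟨[], .nil w, .refl⟩
  | cons e _ ih =>
    obtain ⟨r, hr, hlang⟩ := h.propCond_of_edge hbar hP e
    obtain ⟨t, ht, hrew⟩ := ih
    exact ⟨r ++ t, hr.append ht, Rewrites.append hlang hrew⟩

theorem propCond (hbar : Function.Involutive bar) (hP : ConverseClosed bar P)
    (h : Simulates bar P R R') (hx : PropCond bar P R' x w u) : PropCond bar P R x w u := by
  obtain ⟨s, hpath, hlang⟩ := hx
  obtain ⟨t, ht, hrew⟩ := h.exists_ppath hbar hP hpath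
  exact ⟨t, ht, hlang.trans hrew⟩

end Simulates

theorem occursIn.mono {v : ℕ} {R R' : RAtms α} {Γ : LFmls α} (hR : R ⊆ R')
    (h : occursIn v R Γ) : occursIn v R' Γ :=
  h.imp_left fun ⟨x, w, u, hmem, hv⟩ => ⟨x, w, u, hR hmem, hv⟩

theorem Der.of_simulates (hbar : Function.Involutive bar) (hP : ConverseClosed bar P)
    {R R' : RAtms α} {Γ : LFmls α} (h : Der bar P False True False False R' Γ)
    (hsub : R ⊆ R') (hsim : Simulates bar P R R') : Der bar P False True False False R Γ := by
  induction h generalizing R with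
  | id => exact .id _ _ _ _
  | orr _ ih => exact .orr (ih hsub hsim)
  | andr _ _ ih₁ ih₂ => exact .andr (ih₁ hsub hsim) (ih₂ hsub hsim)
  | boxr hfresh _ ih =>
    exact .boxr (fun hocc => hfresh (hocc.mono hsub)) <|
      ih (Multiset.cons_subset_cons hsub) <|
        (hsim.mono (Multiset.subset_cons _ _)).cons (.of_mem (Multiset.mem_cons_self _ _))
  | pr hPr hprop _ ih => exact .pr hPr (hsim.propCond hbar hP hprop) (ih hsub hsim)
  | diar hDia => exact hDia.elim
  | prodr hProd => exact hProd.elim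
  | cnvr hCnv => exact hCnv.elim

theorem Der.of_cons_atom (hbar : Function.Involutive bar) (hP : ConverseClosed bar P)
    {R : RAtms α} {Γ : LFmls α} {x : α} {w u : ℕ} (hx : PropCond bar P R x w u)
    (h : Der bar P False True False False ((x, w, u) ::ₘ R) Γ) :
    Der bar P False True False False R Γ :=
  h.of_simulates hbar hP (Multiset.subset_cons _ _) ((Simulates.refl R).cons hx)

theorem g3Km_to_kmL_general (hbar : Function.Involutive bar) (hP : ConverseClosed bar P)
    {gDia gPr gProd gCnv : Prop} {R : RAtms α} {Γ : LFmls α}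
    (h : Der bar P gDia gPr gProd gCnv R Γ) : Der bar P False True False False R Γ := by
  induction h with
  | id => exact .id _ _ _ _
  | orr _ ih => exact .orr ih
  | andr _ _ ih₁ ih₂ => exact .andr ih₁ ih₂
  | boxr hfresh _ ih => exact .boxr hfresh ih
  | diar _ _ ih => exact .pr trivial (.of_mem (Multiset.mem_cons_self _ _)) ih
  | pr _ hprop _ ih => exact .pr trivial hprop ih
  | @prodr R C _ x _ w u _ hrule hchain _ ih =>
    have hsub : C ⊆ C + R := Multiset.subset_of_le (Multiset.le_add_right C R)
    have hprop : PropCond bar P (C + R) x w u := .of_rule hrule (hchain.ppath.mono hsub)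
    rw [Multiset.add_cons] at ih
    exact ih.of_cons_atom hbar hP hprop
  | @cnvr R _ x w u _ _ ih =>
    have hprop : PropCond bar P ((x, w, u) ::ₘ R) x w u := .of_mem (Multiset.mem_cons_self _ _)
    rw [Multiset.cons_swap] at ih
    exact ih.of_cons_atom hbar hP (hprop.symm hbar hP)

end

/-- Let `S` be a CFCST system over `Σ`.  Every labelled sequent
derivable in `G3Km(S)` is derivable in the refined labelled calculus `Km(S)L`. -/
theorem g3Km_to_kmL {α : Type} (bar : α → α) (hbar : Function.Involutive bar)
    (S : CFCST α bar) (R : RAtms α) (Γ : LFmls α)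
    (h : G3Km bar S R Γ) : KmL bar S R Γ :=
  g3Km_to_kmL_general hbar (fun x s => (S.closed x s).1) h

end GrammarLogic
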